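/- Let F₄ = GF(4), let n be odd, let g be a monic divisor of Xⁿ−1 in F₄[X], and let ν ∈ F₄[X]. For all c, c' ∈ F₄[X], the Hermitian inner product in F₄^{2n} satisfies ⟨([−ν̄·c·g^{⊥h}]ₙ, [c·g^{⊥h}]ₙ), ([−ν̄·c'·g^{⊥h}]ₙ, [c'·g^{⊥h}]ₙ)⟩_h = ⟨[c·g^{⊥h}]ₙ, [c'·(ν·ν̄+1)·g^{⊥h}]ₙ⟩_h, where the inner product of a pair in F₄ⁿ × F₄ⁿ is the sum of the Hermitian inner products of the two components. -/

import Mathlib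

open Polynomial

set_option synthInstance.maxHeartbeats 1000000
set_option maxHeartbeats 1000000

noncomputable section

/-- The field `F₄ = GF(4)`. -/
abbrev F4 : Type := GaloisField 2 2

/-- The coefficient vector `[p]ₙ ∈ F₄ⁿ` of the remainder of `p` modulo `Xⁿ - 1`
(coefficient of `X^i` in position `i`). -/
def coeffVec (n : ℕ) (p : Polynomial F4) : Fin n → F4 :=
  fun i => (p % (X ^ n - 1)).coeff i

/-- The Hermitian inner product `⟨u,v⟩_h = ∑ i, u i * (v i)²` on `F₄^m`. -/
def hermInner {m : ℕ} (u v : Fin m → F4) : F4 := ∑ i, u i * (v i) ^ 2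

/-- The Hermitian inner product on `F₄ⁿ × F₄ⁿ`: the sum of the Hermitian inner
products of the two components. -/
def hermInner2 {n : ℕ} (u v : (Fin n → F4) × (Fin n → F4)) : F4 :=
  hermInner u.1 v.1 + hermInner u.2 v.2

/-- The conjugate transform `f̄ := f₀² + ∑_{i=1}^{n-1} f_i² X^{n-i}`, where `f` is first
reduced modulo `Xⁿ - 1`. -/
def conjT (n : ℕ) (f : Polynomial F4) : Polynomial F4 :=
  C (((f % (X ^ n - 1)).coeff 0) ^ 2) +
    ∑ i ∈ Finset.Ico 1 n, C (((f % (X ^ n - 1)).coeff i) ^ 2) * X ^ (n - i)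

/-- The Hermitian dual generator `g^{⊥h}(X) := ∑_{j=0}^{deg h} (h_j)² X^{deg h - j}`,
the conjugate reciprocal of the check polynomial `h = (Xⁿ-1)/g`. -/
def dualGen (n : ℕ) (g : Polynomial F4) : Polynomial F4 :=
  ∑ j ∈ Finset.range (((X ^ n - 1) / g).natDegree + 1),
    C ((((X ^ n - 1) / g).coeff j) ^ 2) * X ^ (((X ^ n - 1) / g).natDegree - j)

lemma hermInner_add_right {m : ℕ} (u v w : Fin m → F4) :
    hermInner u (v + w) = hermInner u v + hermInner u w := by
  simp only [hermInner, Pi.add_apply]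
  rw [← Finset.sum_add_distrib]
  refine Finset.sum_congr rfl fun i _ => ?_
  rw [add_pow_char (v i) (w i) 2, mul_add]

lemma hermInner_smul_right {m : ℕ} (c : F4) (u v : Fin m → F4) :
    hermInner u (c • v) = c ^ 2 * hermInner u v := by
  simp only [hermInner, Pi.smul_apply, smul_eq_mul, mul_pow, Finset.mul_sum]
  exact Finset.sum_congr rfl fun i _ => by ring

/-- The Hermitian dual code `C^{⊥h} = {v | ∀ u ∈ C, ⟨u,v⟩_h = 0}` of a linear code in `F₄^m`. -/
def hermDual {m : ℕ} (Ccode : Submodule F4 (Fin m → F4)) : Submodule F4 (Fin m → F4) where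
  carrier := {v | ∀ u ∈ Ccode, hermInner u v = 0}
  zero_mem' := by intro u _; simp [hermInner]
  add_mem' := by
    intro v w hv hw u hu
    rw [hermInner_add_right, hv u hu, hw u hu, add_zero]
  smul_mem' := by
    intro c v hv u hu
    rw [hermInner_smul_right, hv u hu, mul_zero]

lemma hermInner2_add_right {n : ℕ} (u v w : (Fin n → F4) × (Fin n → F4)) :
    hermInner2 u (v + w) = hermInner2 u v + hermInner2 u w := by
  simp only [hermInner2, Prod.fst_add, Prod.snd_add, hermInner_add_right]
  ring

lemma hermInner2_smul_right {n : ℕ} (c : F4) (u v : (Fin n → F4) × (Fin n → F4)) :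
    hermInner2 u (c • v) = c ^ 2 * hermInner2 u v := by
  simp only [hermInner2, Prod.smul_fst, Prod.smul_snd, hermInner_smul_right]
  ring

/-- The Hermitian dual code of a linear code in `F₄ⁿ × F₄ⁿ` (identified with `F₄^{2n}`). -/
def hermDualPair {n : ℕ} (Ccode : Submodule F4 ((Fin n → F4) × (Fin n → F4))) :
    Submodule F4 ((Fin n → F4) × (Fin n → F4)) where
  carrier := {v | ∀ u ∈ Ccode, hermInner2 u v = 0}
  zero_mem' := by intro u _; simp [hermInner2, hermInner]
  add_mem' := by
    intro v w hv hw u hu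
    rw [hermInner2_add_right, hv u hu, hw u hu, add_zero]
  smul_mem' := by
    intro c v hv u hu
    rw [hermInner2_smul_right, hv u hu, mul_zero]

/-- Hamming weight of a vector. -/
def hammingWt {m : ℕ} (u : Fin m → F4) : ℕ := Nat.card {i : Fin m // u i ≠ 0}

/-- The 2-generator quasi-cyclic code `C(g₁,g₂,ν)` of length `2n` and index 2:
the `F₄`-span of all `([a·ν·g₁]ₙ, [a·g₁]ₙ)` and `([b·g₂]ₙ, [b·ν·g₂]ₙ)`. -/
def Cqc (n : ℕ) (g₁ g₂ ν : Polynomial F4) : Submodule F4 ((Fin n → F4) × (Fin n → F4)) :=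
  Submodule.span F4
    ({x | ∃ a : Polynomial F4, x = (coeffVec n (a * ν * g₁), coeffVec n (a * g₁))} ∪
     {x | ∃ b : Polynomial F4, x = (coeffVec n (b * g₂), coeffVec n (b * ν * g₂))})

/-- The quasi-cyclic code `D`: the `F₄`-span of all `([-ν̄·c·g₁^{⊥h}]ₙ, [c·g₁^{⊥h}]ₙ)`
and `([s·g₂^{⊥h}]ₙ, [-ν̄·s·g₂^{⊥h}]ₙ)`. -/
def Dqc (n : ℕ) (g₁ g₂ ν : Polynomial F4) : Submodule F4 ((Fin n → F4) × (Fin n → F4)) :=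
  Submodule.span F4
    ({x | ∃ c : Polynomial F4,
        x = (coeffVec n (-(conjT n ν) * c * dualGen n g₁), coeffVec n (c * dualGen n g₁))} ∪
     {x | ∃ s : Polynomial F4,
        x = (coeffVec n (s * dualGen n g₂), coeffVec n (-(conjT n ν) * s * dualGen n g₂))})

/-- The quotient ring `R = F₄[X]/(Xⁿ - 1)`. -/
abbrev Rng (n : ℕ) : Type := Polynomial F4 ⧸ Ideal.span ({X ^ n - 1} : Set (Polynomial F4))

/-- The natural projection `F₄[X] → R`. -/
def toRng (n : ℕ) : Polynomial F4 →+* Rng n := Ideal.Quotient.mk _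

/-- The `R`-linear map `R → R × R`, `a ↦ (a·û, a·v̂)`, where `û, v̂` are the images of
`u, v` in `R`. -/
def qcMap (n : ℕ) (u v : Polynomial F4) : Rng n →ₗ[Rng n] Rng n × Rng n :=
  (LinearMap.toSpanSingleton (Rng n) (Rng n) (toRng n u)).prod
    (LinearMap.toSpanSingleton (Rng n) (Rng n) (toRng n v))

lemma cv_congr {n : ℕ} {p q : Polynomial F4} (h : (X ^ n - 1 : Polynomial F4) ∣ p - q) :
    coeffVec n p = coeffVec n q := by
  funext i
  simp only [coeffVec, mod_eq_of_dvd_sub h]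

lemma cv_add (n : ℕ) (p q : Polynomial F4) :
    coeffVec n (p + q) = coeffVec n p + coeffVec n q := by
  funext i
  simp only [coeffVec, add_mod, coeff_add, Pi.add_apply]

lemma cv_mon {n : ℕ} (hn : 0 < n) (a : F4) (k : ℕ) :
    coeffVec n (C a * X ^ k) = fun i : Fin n => if k % n = (i : ℕ) then a else 0 := by
  have h1 : coeffVec n (C a * X ^ k) = coeffVec n (C a * X ^ (k % n)) := by
    apply cv_congr
    have h : (X ^ n - 1 : Polynomial F4) ∣ (X ^ n) ^ (k / n) - 1 := by
      simpa using sub_dvd_pow_sub_pow (X ^ n : Polynomial F4) 1 (k / n)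
    have e : C a * X ^ k - C a * X ^ (k % n)
        = ((X ^ n) ^ (k / n) - 1) * (C a * X ^ (k % n) : Polynomial F4) := by
      conv_lhs => rw [← Nat.div_add_mod k n, pow_add, pow_mul]
      simp only [Nat.mul_add_mod, Nat.mod_mod]
      ring
    rw [e]
    exact Dvd.dvd.mul_right h _
  have hd : degree (X ^ n - 1 : Polynomial F4) = n := by
    simpa using degree_X_pow_sub_C hn (1 : F4)
  have h0 : (X ^ n - 1 : Polynomial F4) ≠ 0 := by
    intro h; rw [h] at hd; simp at hd
  rw [h1]
  funext i
  have h2 : (C a * X ^ (k % n) : Polynomial F4) % (X ^ n - 1) = C a * X ^ (k % n) := by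
    rw [mod_eq_self_iff h0, hd]
    refine lt_of_le_of_lt (degree_C_mul_X_pow_le _ _) ?_
    exact_mod_cast Nat.mod_lt k hn
  simp only [coeffVec, h2, coeff_C_mul_X_pow, eq_comm]

lemma hI_add_left {m : ℕ} (u v w : Fin m → F4) :
    hermInner (u + v) w = hermInner u w + hermInner v w := by
  simp only [hermInner, Pi.add_apply, add_mul, Finset.sum_add_distrib]

lemma cv_zero (n : ℕ) : coeffVec n 0 = 0 := by
  have := cv_add n 0 0
  simpa using this

lemma hI_mon {n : ℕ} (hn : 0 < n) (a b : F4) (k l : ℕ) :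
    hermInner (coeffVec n (C a * X ^ k)) (coeffVec n (C b * X ^ l)) =
      if k % n = l % n then a * b ^ 2 else 0 := by
  rw [cv_mon hn, cv_mon hn, hermInner, Finset.sum_eq_single (⟨k % n, Nat.mod_lt k hn⟩ : Fin n)]
  · by_cases h : k % n = l % n
    · simp [h]
    · simp [h, Ne.symm h]
  · intro i _ hi
    have : k % n ≠ i := fun h => hi (Fin.ext h.symm)
    simp [this]
  · simp

lemma hI_shift {n : ℕ} (hn : 0 < n) (a : F4) {i : ℕ} (hi : i ≤ n) (p q : Polynomial F4) :
    hermInner (coeffVec n (C (a ^ 2) * X ^ (n - i) * p)) (coeffVec n q) =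
      hermInner (coeffVec n p) (coeffVec n (C a * X ^ i * q)) := by
  induction p using Polynomial.induction_on' with
  | add p₁ p₂ h₁ h₂ => rw [mul_add, cv_add, cv_add, hI_add_left, hI_add_left, h₁, h₂]
  | monomial k s =>
    induction q using Polynomial.induction_on' with
    | add q₁ q₂ h₁ h₂ =>
      rw [mul_add, cv_add, cv_add, hermInner_add_right, hermInner_add_right, h₁, h₂]
    | monomial l t =>
      rw [← C_mul_X_pow_eq_monomial, ← C_mul_X_pow_eq_monomial]
      have e1 : C (a ^ 2) * X ^ (n - i) * (C s * X ^ k)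
          = (C (a ^ 2 * s) * X ^ (n - i + k) : Polynomial F4) := by
        rw [C_mul, pow_add]; ring
      have e2 : C a * X ^ i * (C t * X ^ l) = (C (a * t) * X ^ (i + l) : Polynomial F4) := by
        rw [C_mul, pow_add]; ring
      rw [e1, e2, hI_mon hn, hI_mon hn]
      have e3 : ((n - i + k) % n = l % n) ↔ (k % n = (i + l) % n) := by
        change (n - i + k) ≡ l [MOD n] ↔ k ≡ i + l [MOD n]
        have e4 : i + (n - i + k) = n + k := by omega
        have e5 : n + k ≡ k [MOD n] := by simp [Nat.ModEq]
        constructor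
        · intro h
          have := Nat.ModEq.add_left i h
          rw [e4] at this
          exact e5.symm.trans this
        · intro h
          apply Nat.ModEq.add_left_cancel' i
          rw [e4]
          exact e5.trans h
      simp only [e3]
      split_ifs
      · ring
      · rfl

lemma hI_sum_left {n : ℕ} (S : Finset ℕ) (f : ℕ → Polynomial F4) (v : Fin n → F4) :
    hermInner (coeffVec n (∑ i ∈ S, f i)) v = ∑ i ∈ S, hermInner (coeffVec n (f i)) v := by
  classical
  induction S using Finset.induction_on with
  | empty => simp [cv_zero, hermInner]
  | insert a S ha ih => rw [Finset.sum_insert ha, Finset.sum_insert ha, cv_add, hI_add_left, ih]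

lemma hI_sum_right {n : ℕ} (S : Finset ℕ) (f : ℕ → Polynomial F4) (v : Fin n → F4) :
    hermInner v (coeffVec n (∑ i ∈ S, f i)) = ∑ i ∈ S, hermInner v (coeffVec n (f i)) := by
  classical
  induction S using Finset.induction_on with
  | empty => simp [cv_zero, hermInner]
  | insert a S ha ih =>
    rw [Finset.sum_insert ha, Finset.sum_insert ha, cv_add, hermInner_add_right, ih]

lemma hI_adj {n : ℕ} (hn : 0 < n) (ν p q : Polynomial F4) :
    hermInner (coeffVec n (conjT n ν * p)) (coeffVec n q) =
      hermInner (coeffVec n p) (coeffVec n (ν * q)) := by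
  set r := ν % (X ^ n - 1) with hr
  have h1 : coeffVec n (conjT n ν * p) =
      coeffVec n (∑ i ∈ Finset.range n, C ((r.coeff i) ^ 2) * X ^ (n - i) * p) := by
    apply cv_congr
    rw [← Finset.sum_mul, Finset.range_eq_Ico, Finset.sum_eq_sum_Ico_succ_bot hn, conjT, ← hr]
    refine ⟨- (C (r.coeff 0 ^ 2) * p), ?_⟩
    simp only [Nat.sub_zero, zero_add]
    ring
  have hd : degree (X ^ n - 1 : Polynomial F4) = n := by
    simpa using degree_X_pow_sub_C hn (1 : F4)
  have h0 : (X ^ n - 1 : Polynomial F4) ≠ 0 := by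
    intro h; rw [h] at hd; simp at hd
  have h2 : coeffVec n (ν * q) =
      coeffVec n (∑ i ∈ Finset.range n, C (r.coeff i) * X ^ i * q) := by
    have hrd : r.degree < n := by
      rw [← hd]; exact EuclideanDomain.mod_lt ν h0
    have e : r = ∑ i ∈ Finset.range n, C (r.coeff i) * X ^ i := by
      by_cases hz : r = 0
      · simp [hz]
      · exact as_sum_range_C_mul_X_pow' r ((natDegree_lt_iff_degree_lt hz).2 hrd)
    rw [← Finset.sum_mul, ← e]
    apply cv_congr
    rw [← sub_mul]
    refine Dvd.dvd.mul_right ⟨ν / (X ^ n - 1), ?_⟩ _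
    rw [hr, sub_eq_iff_eq_add]
    exact (EuclideanDomain.div_add_mod ν (X ^ n - 1)).symm
  rw [h1, h2, hI_sum_left, hI_sum_right]
  refine Finset.sum_congr rfl fun i hi => ?_
  exact hI_shift hn _ (Finset.mem_range.1 hi).le p q

/-- Key computation for self-orthogonality of a 1-generator component of the dual code:
the Hermitian inner product reduces to `⟨[c·g^{⊥h}]ₙ, [c'·(ν·ν̄+1)·g^{⊥h}]ₙ⟩_h`. -/
theorem herm_inner_same_generator (n : ℕ) (hn : Odd n) (g ν : Polynomial F4)
    (hgm : g.Monic) (hgd : g ∣ X ^ n - 1) :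
    ∀ c c' : Polynomial F4,
      hermInner2
        (coeffVec n (-(conjT n ν) * c * dualGen n g), coeffVec n (c * dualGen n g))
        (coeffVec n (-(conjT n ν) * c' * dualGen n g), coeffVec n (c' * dualGen n g)) =
      hermInner (coeffVec n (c * dualGen n g))
        (coeffVec n (c' * (ν * conjT n ν + 1) * dualGen n g)) := by
  intro c c'
  have h2 : (-1 : Polynomial F4) = 1 := by
    have : (2 : Polynomial F4) = 0 := CharP.cast_eq_zero (Polynomial F4) 2
    linear_combination -this
  have hneg : ∀ p : Polynomial F4, -p = p := fun p => by
    rw [← neg_one_mul, h2, one_mul]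
  rw [hneg, hermInner2]
  simp only
  rw [mul_assoc, hI_adj hn.pos, ← hermInner_add_right, ← cv_add]
  congr 2
  ring

end
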